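/- arXiv:2406.06231 — 2 statements merged into one kernel-verified Lean document; each statement's English description precedes it below -/
import Mathlib

section
/- Let (n_dp(γ))_{γ>0} be a collection of privacy mechanisms for the sample size such that for every γ > 0, E_{n | n_dp(γ) = n0} |n − n0| = γ. Let p(s|x) be a (0,δ)-DP mechanism, p(x|θ,n) the distribution of n i.i.d. records, p(n) a (possibly improper) prior with proper posterior, and p(θ) a proper prior. Then for any measurable set S such that P(s ∈ S | n = n0) > 0 and P(s ∈ S | n_dp(γ) = n0) > 0 for all γ, the posterior distributions satisfy TV(p(θ | s ∈ S, n_dp(γ) = n0), p(θ | s ∈ S, n = n0)) → 0 as γ → 0. -/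
open MeasureTheory Filter Topology Asymptotics
open scoped ENNReal

noncomputable def tvDist {α : Type*} [MeasurableSpace α] (P Q : Measure α) : ℝ :=
  ⨆ S : {S : Set α // MeasurableSet S}, |(P S.1).toReal - (Q S.1).toReal|

def IsRect {d : ℕ} (R : Set (Fin d → ℝ)) : Prop :=
  ∃ I : Fin d → Set ℝ, (∀ i, (I i).OrdConnected) ∧ R = Set.univ.pi I

noncomputable def ksDist {d : ℕ} (P Q : Measure (Fin d → ℝ)) : ℝ :=
  ⨆ R : {R : Set (Fin d → ℝ) // IsRect R}, |(P R.1).toReal - (Q R.1).toReal|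

def IsRectProd {p d : ℕ} (R : Set ((Fin p → ℝ) × (Fin d → ℝ))) : Prop :=
  ∃ A B, IsRect A ∧ IsRect B ∧ R = A ×ˢ B

noncomputable def ksDistProd {p d : ℕ} (P Q : Measure ((Fin p → ℝ) × (Fin d → ℝ))) : ℝ :=
  ⨆ R : {R : Set ((Fin p → ℝ) × (Fin d → ℝ)) // IsRectProd R}, |(P R.1).toReal - (Q R.1).toReal|

def TendstoInDist {ι α : Type*} [MeasurableSpace α] [TopologicalSpace α]
    (l : Filter ι) (μ : ι → Measure α) (ν : Measure α) : Prop :=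
  ∀ f : BoundedContinuousFunction α ℝ,
    Tendsto (fun n => ∫ x, f x ∂(μ n)) l (𝓝 (∫ x, f x ∂ν))

noncomputable def scaleShift {d : ℕ} (b a : ℝ) (m : ℝ) (c : Fin d → ℝ) :
    (Fin d → ℝ) → (Fin d → ℝ) :=
  fun s => m ^ b • (m ^ (-a) • s - c)

noncomputable def mcdf {d : ℕ} (μ : Measure (Fin d → ℝ)) (t : Fin d → ℝ) : ℝ :=
  (μ {x | ∀ i, x i ≤ t i}).toReal

/-! Since `E|n - n0|` dominates `P(n ≠ n0)`, the posterior of `n` given `n_dp(γ) = n0` has mass at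
least `1 - γ` at `n0`. Hence the law of `s` given `θ` and `n_dp(γ) = n0`, a mixture over `n` with
these weights, is within `γ` in total variation of its law given `n = n0`, uniformly in `θ`. Bayes'
formula divides integrals of these two likelihoods of `S` by their normalising constants, which
differ by at most `γ` as well, and this gives the bound `2γ / P(s ∈ S | n = n0)`. -/

open ProbabilityTheory

lemma abs_inv_mul_sub_inv_mul_le {a b Z W : ℝ} (ha : 0 ≤ a) (haZ : a ≤ Z) (hW : 0 < W) :
    |Z⁻¹ * a - W⁻¹ * b| ≤ (|Z - W| + |a - b|) / W := by
  have hratio : Z⁻¹ * a ≤ 1 := inv_mul_le_one_of_le₀ haZ (ha.trans haZ)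
  have hratio₀ : 0 ≤ Z⁻¹ * a := mul_nonneg (inv_nonneg.2 (ha.trans haZ)) ha
  have ha_eq : a = Z⁻¹ * a * Z := by
    rcases eq_or_ne Z 0 with rfl | hZ
    · linarith
    · field_simp
  have hsplit : Z⁻¹ * a - W⁻¹ * b = (Z⁻¹ * a * (W - Z) + (a - b)) / W := by
    rw [mul_sub, ← ha_eq]
    field_simp
    ring
  rw [hsplit, abs_div, abs_of_pos hW]
  gcongr
  calc |Z⁻¹ * a * (W - Z) + (a - b)| ≤ |Z⁻¹ * a * (W - Z)| + |a - b| := abs_add_le _ _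
    _ = Z⁻¹ * a * |Z - W| + |a - b| := by rw [abs_mul, abs_of_nonneg hratio₀, abs_sub_comm]
    _ ≤ |Z - W| + |a - b| := by
      gcongr
      exact mul_le_of_le_one_left (abs_nonneg _) hratio

section TotalVariation

variable {α : Type*} [MeasurableSpace α] {P Q : Measure α}

lemma tvDist_nonneg : 0 ≤ tvDist P Q :=
  Real.iSup_nonneg fun _ => abs_nonneg _

lemma tvDist_le {c : ℝ} (h : ∀ A, MeasurableSet A → |P.real A - Q.real A| ≤ c) :
    tvDist P Q ≤ c :=
  have : Nonempty {A : Set α // MeasurableSet A} := ⟨∅, .empty⟩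
  ciSup_le fun A => h A A.2

lemma abs_measureReal_sub_le_of_smul_le [IsProbabilityMeasure P] [IsProbabilityMeasure Q]
    {p : ℝ≥0∞} (h : p • Q ≤ P) {S : Set α} (hS : MeasurableSet S) :
    |P.real S - Q.real S| ≤ 1 - p.toReal := by
  have hle (T : Set α) : p.toReal * Q.real T ≤ P.real T := by
    simpa [measureReal_def] using ENNReal.toReal_mono (measure_ne_top P T) (h T)
  have hp : p.toReal ≤ 1 := by simpa using hle Set.univ
  have hS_le := hle S
  have hSc_le := hle Sᶜ
  rw [probReal_compl_eq_one_sub hS, probReal_compl_eq_one_sub hS] at hSc_le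
  have hpQ : p.toReal * Q.real S ≤ Q.real S := mul_le_of_le_one_left measureReal_nonneg hp
  have hpQc : p.toReal * (1 - Q.real S) ≤ 1 - Q.real S :=
    mul_le_of_le_one_left (sub_nonneg.2 measureReal_le_one) hp
  rw [abs_le]
  constructor <;> linarith

end TotalVariation

lemma tsum_le_add_tsum_mul_abs_sub (w : ℕ → ℝ≥0∞) (n : ℕ) :
    ∑' k, w k ≤ w n + ∑' k, w k * ENNReal.ofReal |(k : ℝ) - n| := by
  rw [← tsum_ite_eq n w, ← ENNReal.tsum_add]
  refine ENNReal.tsum_le_tsum fun k => ?_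
  split_ifs with hk
  · exact le_self_add
  · have hdist : (1 : ℝ) ≤ |(k : ℝ) - n| := by
      exact_mod_cast Int.one_le_abs (sub_ne_zero.2 (Nat.cast_injective.ne hk) : (k : ℤ) - n ≠ 0)
    rw [zero_add]
    exact le_mul_of_one_le_right' (ENNReal.one_le_ofReal.2 hdist)

lemma one_sub_toReal_le_of_moment_le {w : ℕ → ℝ≥0∞} (hw : ∑' k, w k = 1) {n : ℕ} {γ : ℝ}
    (hγ : 0 ≤ γ)
    (hmoment : ∑' k, w k * ENNReal.ofReal |(k : ℝ) - n| ≤ ENNReal.ofReal γ) :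
    1 - (w n).toReal ≤ γ := by
  have hn : w n ≠ ⊤ := ne_top_of_le_ne_top ENNReal.one_ne_top (hw ▸ ENNReal.le_tsum n)
  have hle : 1 ≤ w n + ENNReal.ofReal γ :=
    hw ▸ (tsum_le_add_tsum_mul_abs_sub w n).trans (add_le_add_right hmoment _)
  have hreal := ENNReal.toReal_mono (by finiteness) hle
  rw [ENNReal.toReal_one, ENNReal.toReal_add hn ENNReal.ofReal_ne_top,
    ENNReal.toReal_ofReal hγ] at hreal
  linarith

section Posterior

variable {Θ Y : Type*} [MeasurableSpace Θ] [MeasurableSpace Y]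

/-- The mixture `∑ᵢ wᵢ κᵢ` of a countable family of kernels. With `w` the posterior of `n` given
`n_dp = n0` and `κ k` the law of `s` given `θ` and `n = k`, it is the law of `s` given `θ` and
`n_dp = n0`. -/
noncomputable def mixtureKernel {ι : Type*} [Countable ι] (w : ι → ℝ≥0∞) (κ : ι → Kernel Θ Y) :
    Kernel Θ Y where
  toFun θ := Measure.sum fun i => w i • κ i θ
  measurable' := Measure.measurable_of_measurable_coe _ fun B hB => by
    simp only [Measure.sum_apply _ hB, Measure.smul_apply, smul_eq_mul]
    exact Measurable.tsum fun i => ((κ i).measurable_coe hB).const_mul (w i)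

lemma mixtureKernel_apply {ι : Type*} [Countable ι] (w : ι → ℝ≥0∞) (κ : ι → Kernel Θ Y) (θ : Θ) :
    mixtureKernel w κ θ = Measure.sum fun i => w i • κ i θ :=
  rfl

section Mixture

variable {ι : Type*} [Countable ι] {w : ι → ℝ≥0∞} (κ : ι → Kernel Θ Y) [∀ i, IsMarkovKernel (κ i)]

lemma isMarkovKernel_mixtureKernel (hw : ∑' i, w i = 1) : IsMarkovKernel (mixtureKernel w κ) where
  isProbabilityMeasure θ := ⟨by simp [mixtureKernel_apply, hw]⟩

lemma abs_mixtureKernel_real_sub_le (hw : ∑' i, w i = 1) (i : ι) (θ : Θ) {S : Set Y}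
    (hS : MeasurableSet S) :
    |(mixtureKernel w κ θ).real S - (κ i θ).real S| ≤ 1 - (w i).toReal :=
  have := isMarkovKernel_mixtureKernel κ hw
  have hle : w i • κ i θ ≤ mixtureKernel w κ θ := Measure.le_sum (fun j => w j • κ j θ) i
  abs_measureReal_sub_le_of_smul_le hle hS

end Mixture

/-- The joint law of a parameter `θ` with prior `π` and an observation `s` with law `κ θ` given `θ`.
For s-finite `π` and `κ` it is `π ⊗ₘ κ`, but it keeps its meaning where `π ⊗ₘ κ` is set to `0`. -/
noncomputable def jointLaw (π : Measure Θ) (κ : Kernel Θ Y) : Measure (Θ × Y) :=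
  π.bind fun θ => (κ θ).map (Prod.mk θ)

/-- The posterior `p(θ | s ∈ S)` for the prior `π` and the likelihood `κ`: the first marginal of the
joint law restricted to `s ∈ S`, normalised. When `s ∈ S` has probability `0` the normalising
constant is `∞` and the result is the zero measure. -/
noncomputable def abcPosterior (π : Measure Θ) (κ : Kernel Θ Y) (S : Set Y) : Measure Θ :=
  (jointLaw π κ (Set.univ ×ˢ S))⁻¹ • ((jointLaw π κ).restrict (Set.univ ×ˢ S)).map Prod.fst

lemma jointLaw_eq_compProd (π : Measure Θ) [SFinite π] (κ : Kernel Θ Y) [IsSFiniteKernel κ] :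
    jointLaw π κ = π ⊗ₘ κ := by
  simp only [Measure.compProd_eq_comp_prod, jointLaw, ← Measure.dirac_prod, ← Kernel.id_apply,
    ← Kernel.prod_apply]

lemma comp_measureReal_apply (π : Measure Θ) [IsFiniteMeasure π] (κ : Kernel Θ Y)
    [IsFiniteKernel κ] {S : Set Y} (hS : MeasurableSet S) :
    (κ ∘ₘ π).real S = ∫ θ, (κ θ).real S ∂π := by
  rw [measureReal_def, Measure.bind_apply hS κ.aemeasurable]
  exact (integral_toReal (κ.measurable_coe hS).aemeasurable
    (ae_of_all _ fun θ => measure_lt_top (κ θ) S)).symm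

lemma jointLaw_real_prod (π : Measure Θ) [IsFiniteMeasure π] (κ : Kernel Θ Y) [IsFiniteKernel κ]
    {A : Set Θ} (hA : MeasurableSet A) {S : Set Y} (hS : MeasurableSet S) :
    (jointLaw π κ).real (A ×ˢ S) = ∫ θ in A, (κ θ).real S ∂π := by
  rw [jointLaw_eq_compProd, ← comp_measureReal_apply (π.restrict A) κ hS, measureReal_def,
    measureReal_def, Measure.compProd_apply_prod hA hS, Measure.bind_apply hS κ.aemeasurable]

lemma abcPosterior_real_apply (π : Measure Θ) [IsFiniteMeasure π] (κ : Kernel Θ Y)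
    [IsFiniteKernel κ] {A : Set Θ} (hA : MeasurableSet A) {S : Set Y} (hS : MeasurableSet S) :
    (abcPosterior π κ S).real A = ((κ ∘ₘ π).real S)⁻¹ * ∫ θ in A, (κ θ).real S ∂π := by
  have hrect : Prod.fst ⁻¹' A ∩ Set.univ ×ˢ S = A ×ˢ S := by ext; simp
  rw [abcPosterior, measureReal_ennreal_smul_apply, map_measureReal_apply measurable_fst hA,
    measureReal_restrict_apply (measurable_fst hA), hrect, jointLaw_real_prod π κ hA hS,
    ENNReal.toReal_inv, ← measureReal_def, jointLaw_real_prod π κ .univ hS, setIntegral_univ,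
    comp_measureReal_apply π κ hS]

lemma abs_setIntegral_real_sub_le (π : Measure Θ) [IsProbabilityMeasure π] (κ η : Kernel Θ Y)
    [IsFiniteKernel κ] [IsFiniteKernel η] {S : Set Y} (hS : MeasurableSet S) {c : ℝ}
    (hc : ∀ᵐ θ ∂π, |(κ θ).real S - (η θ).real S| ≤ c) (A : Set Θ) :
    |∫ θ in A, (κ θ).real S ∂π - ∫ θ in A, (η θ).real S ∂π| ≤ c := by
  obtain ⟨θ, hθ⟩ := hc.exists
  have hc₀ : 0 ≤ c := (abs_nonneg _).trans hθ
  calc |∫ θ in A, (κ θ).real S ∂π - ∫ θ in A, (η θ).real S ∂π|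
      = |∫ θ in A, ((κ θ).real S - (η θ).real S) ∂π| := by
        rw [integral_sub (Kernel.IsFiniteKernel.integrable _ κ hS)
          (Kernel.IsFiniteKernel.integrable _ η hS)]
    _ ≤ c * π.real A := by
        simp only [← Real.norm_eq_abs] at hc ⊢
        exact norm_setIntegral_le_of_norm_le_const_ae' (measure_lt_top π A)
          (hc.mono fun _ hθ _ => hθ)
    _ ≤ c := mul_le_of_le_one_right hc₀ measureReal_le_one

theorem tvDist_abcPosterior_le (π : Measure Θ) [IsProbabilityMeasure π] (κ η : Kernel Θ Y)
    [IsFiniteKernel κ] [IsFiniteKernel η] {S : Set Y} (hS : MeasurableSet S) {c : ℝ}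
    (hc : ∀ᵐ θ ∂π, |(κ θ).real S - (η θ).real S| ≤ c) (hη : (η ∘ₘ π) S ≠ 0) :
    tvDist (abcPosterior π κ S) (abcPosterior π η S) ≤ 2 * c / (η ∘ₘ π).real S := by
  refine tvDist_le fun A hA => ?_
  have hη_pos : 0 < (η ∘ₘ π).real S := ENNReal.toReal_pos hη (measure_ne_top _ S)
  have hκ_nonneg (θ : Θ) : 0 ≤ (κ θ).real S := measureReal_nonneg
  have hκ_le : ∫ θ in A, (κ θ).real S ∂π ≤ (κ ∘ₘ π).real S := by
    rw [comp_measureReal_apply π κ hS]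
    exact setIntegral_le_integral (Kernel.IsFiniteKernel.integrable π κ hS)
      (ae_of_all _ hκ_nonneg)
  have hconst : |(κ ∘ₘ π).real S - (η ∘ₘ π).real S| ≤ c := by
    simpa only [comp_measureReal_apply π _ hS, setIntegral_univ]
      using abs_setIntegral_real_sub_le π κ η hS hc Set.univ
  rw [abcPosterior_real_apply π κ hA hS, abcPosterior_real_apply π η hA hS]
  refine (abs_inv_mul_sub_inv_mul_le (integral_nonneg hκ_nonneg) hκ_le hη_pos).trans ?_
  rw [two_mul]
  gcongr
  exact abs_setIntegral_real_sub_le π κ η hS hc A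

theorem tvDist_abcPosterior_mixtureKernel_le (π : Measure Θ) [IsProbabilityMeasure π]
    (κ : ℕ → Kernel Θ Y) [∀ k, IsMarkovKernel (κ k)] {n : ℕ} {w : ℕ → ℝ≥0∞}
    (hw : ∑' k, w k = 1) {γ : ℝ} (hγ : 0 ≤ γ)
    (hmoment : ∑' k, w k * ENNReal.ofReal |(k : ℝ) - n| ≤ ENNReal.ofReal γ)
    {S : Set Y} (hS : MeasurableSet S) (hSpos : (κ n ∘ₘ π) S ≠ 0) :
    tvDist (abcPosterior π (mixtureKernel w κ) S) (abcPosterior π (κ n) S)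
      ≤ 2 * γ / (κ n ∘ₘ π).real S := by
  have := isMarkovKernel_mixtureKernel κ hw
  exact tvDist_abcPosterior_le π _ _ hS (ae_of_all _ fun θ =>
    (abs_mixtureKernel_real_sub_le κ hw n θ hS).trans
      (one_sub_toReal_le_of_moment_le hw hγ hmoment)) hSpos

theorem statement6_general (π : Measure Θ) [IsProbabilityMeasure π] (κ : ℕ → Kernel Θ Y)
    [∀ k, IsMarkovKernel (κ k)] (n0 : ℕ) (post : ℝ → ℕ → ℝ≥0∞)
    (hpost : ∀ γ : ℝ, 0 < γ → ∑' k, post γ k = 1)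
    (hmoment : ∀ γ : ℝ, 0 < γ →
      ∑' k, post γ k * ENNReal.ofReal |(k : ℝ) - n0| ≤ ENNReal.ofReal γ)
    {S : Set Y} (hS : MeasurableSet S) (hSpos : (κ n0 ∘ₘ π) S ≠ 0) :
    Tendsto (fun γ : ℝ =>
      tvDist (abcPosterior π (mixtureKernel (post γ) κ) S) (abcPosterior π (κ n0) S))
      (𝓝[>] 0) (𝓝 0) := by
  have hbound : Tendsto (fun γ : ℝ => 2 * γ / (κ n0 ∘ₘ π).real S) (𝓝[>] 0) (𝓝 0) :=
    tendsto_nhdsWithin_of_tendsto_nhds (Continuous.tendsto' (by fun_prop) _ _ (by simp))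
  refine squeeze_zero' (Eventually.of_forall fun _ => tvDist_nonneg) ?_ hbound
  filter_upwards [self_mem_nhdsWithin] with γ (hγ : 0 < γ)
  exact tvDist_abcPosterior_mixtureKernel_le π κ (hpost γ hγ) hγ.le (hmoment γ hγ) hS hSpos

end Posterior

/-- Theorem 4.4, ABC posteriors as the privacy budget grows: for a family
of sample-size mechanisms `n_dp(γ)` with posterior expectation
`E_{n | n_dp(γ) = n0}|n − n0| = γ`, a `(0,δ)`-DP mechanism for `s`, i.i.d. data, a
proper prior on `θ`, and a measurable set `S` of positive probability under both
conditionals, the conditional posteriors `p(θ | s ∈ S, n_dp(γ) = n0)` converge in total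
variation to `p(θ | s ∈ S, n = n0)` as `γ → 0⁺`. -/
theorem statement6 {𝒳 Θ : Type*} [MeasurableSpace 𝒳] [MeasurableSpace Θ] {d : ℕ}
    (M : (n : ℕ) → (Fin n → 𝒳) → Measure (Fin d → ℝ))
    (hM : ∀ n x, IsProbabilityMeasure (M n x))
    (hMmeas : ∀ n, Measurable (M n))
    (δ : ℝ) (hδ : 0 ≤ δ)
    (hDP : ∀ n (x : Fin (n + 1) → 𝒳) (i : Fin (n + 1)),
      tvDist (M (n + 1) x) (M n (x ∘ i.succAbove)) ≤ δ)
    (Q : Θ → Measure 𝒳) (hQ : ∀ θ, IsProbabilityMeasure (Q θ))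
    (hmargmeas : ∀ n : ℕ, Measurable fun θ => (Measure.pi fun _ : Fin n => Q θ).bind (M n))
    (π : Measure Θ) (hπ : IsProbabilityMeasure π)
    (n0 : ℕ)
    -- for each γ > 0, the posterior on `n` induced by the mechanism `n_dp(γ)`,
    -- proper, supported on k ≥ 1, with posterior moment `E|n - n0| = γ`
    (post : ℝ → ℕ → ℝ≥0∞)
    (hpost0 : ∀ γ : ℝ, 0 < γ → post γ 0 = 0)
    (hpost1 : ∀ γ : ℝ, 0 < γ → ∑' k, post γ k = 1)
    (hmoment : ∀ γ : ℝ, 0 < γ →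
      (∑' k : ℕ, post γ k * ENNReal.ofReal |(k : ℝ) - (n0 : ℝ)|) = ENNReal.ofReal γ)
    (S : Set (Fin d → ℝ)) (hSmeas : MeasurableSet S)
    -- P(s ∈ S | n = n0) > 0
    (hSposB : (π.bind fun θ => (Measure.pi fun _ : Fin n0 => Q θ).bind (M n0)) S ≠ 0)
    -- P(s ∈ S | n_dp(γ) = n0) > 0 for all γ > 0
    (hSposU : ∀ γ : ℝ, 0 < γ →
      (π.bind fun θ => Measure.sum fun k =>
        post γ k • (Measure.pi fun _ : Fin k => Q θ).bind (M k)) S ≠ 0) :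
    Tendsto (fun γ : ℝ =>
      tvDist
        -- p(θ | s ∈ S, n_dp(γ) = n0)
        ((((π.bind fun θ => ((Measure.sum fun k =>
              post γ k • (Measure.pi fun _ : Fin k => Q θ).bind (M k)).map fun s => (θ, s)))
              (Set.univ ×ˢ S))⁻¹ •
          (((π.bind fun θ => ((Measure.sum fun k =>
              post γ k • (Measure.pi fun _ : Fin k => Q θ).bind (M k)).map
              fun s => (θ, s))).restrict (Set.univ ×ˢ S)).map Prod.fst)))
        -- p(θ | s ∈ S, n = n0)
        ((((π.bind fun θ =>
              (((Measure.pi fun _ : Fin n0 => Q θ).bind (M n0)).map fun s => (θ, s)))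
              (Set.univ ×ˢ S))⁻¹ •
          (((π.bind fun θ =>
              (((Measure.pi fun _ : Fin n0 => Q θ).bind (M n0)).map
              fun s => (θ, s))).restrict (Set.univ ×ˢ S)).map Prod.fst))))
      (𝓝[>] (0 : ℝ)) (𝓝 0) := by
  have (n : ℕ) : IsMarkovKernel (⟨_, hmargmeas n⟩ : Kernel Θ (Fin d → ℝ)) :=
    ⟨fun θ => isProbabilityMeasure_bind (hMmeas n).aemeasurable (ae_of_all _ (hM n))⟩
  exact statement6_general π (fun n => ⟨_, hmargmeas n⟩) n0 post hpost1
    (fun γ hγ => (hmoment γ hγ).le) hSmeas hSposB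
end

section
/- Let p(s|x) be the distribution of a (0,δ)-DP privacy mechanism on datasets (meaning the total variation distance between its output distributions on any two datasets differing by the addition or removal of one record is at most δ), and let p(x|θ,n) be the distribution of a dataset consisting of n i.i.d. records. Then for any two sample sizes n and m, the total variation distance between the marginal distributions of the output satisfies TV(p(s|θ,n), p(s|θ,m)) ≤ δ |n − m|. -/
/-!
Deleting a record maps the law of `n + 1` i.i.d. records to the law of `n` i.i.d. records. Hence the
output laws for sample sizes `n + 1` and `n` are mixtures, over the same random dataset of `n + 1`
records, of output laws that privacy keeps within `δ` of each other. Mixing does not increase total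
variation distance, so consecutive sample sizes give outputs at distance at most `δ`, and the
triangle inequality along the sample sizes between `n` and `m` gives the factor `|n - m|`.
-/

open MeasureTheory Filter Topology
open scoped ENNReal

open ProbabilityTheory

theorem dist_le_mul_abs_sub_of_dist_succ_le {α : Type*} [PseudoMetricSpace α] {f : ℕ → α} {c : ℝ}
    (hf : ∀ n, dist (f n) (f (n + 1)) ≤ c) (n m : ℕ) :
    dist (f n) (f m) ≤ c * |(n : ℝ) - m| := by
  wlog hnm : n ≤ m generalizing n m
  · rw [dist_comm, abs_sub_comm]
    exact this m n (le_of_not_ge hnm)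
  calc dist (f n) (f m) ≤ ∑ _k ∈ Finset.Ico n m, c := dist_le_Ico_sum_of_dist_le hnm fun _ _ => hf _
    _ = c * |(n : ℝ) - m| := by
      rw [Finset.sum_const, Nat.card_Ico, nsmul_eq_mul, Nat.cast_sub hnm, abs_sub_comm,
        abs_of_nonneg (sub_nonneg.2 (Nat.cast_le.2 hnm)), mul_comm]

section TotalVariation

variable {α : Type*} [MeasurableSpace α] (P Q : Measure α) [IsFiniteMeasure P] [IsFiniteMeasure Q]

theorem bddAbove_range_abs_measureReal_sub :
    BddAbove (Set.range fun S : {S : Set α // MeasurableSet S} => |P.real S - Q.real S|) := by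
  refine ⟨P.real Set.univ + Q.real Set.univ, ?_⟩
  rintro _ ⟨S, rfl⟩
  calc |P.real S - Q.real S| ≤ |P.real S| + |Q.real S| := abs_sub _ _
    _ = P.real S + Q.real S := by simp only [abs_of_nonneg measureReal_nonneg]
    _ ≤ P.real Set.univ + Q.real Set.univ :=
      add_le_add (measureReal_mono (Set.subset_univ _)) (measureReal_mono (Set.subset_univ _))

variable {P Q}

theorem tvDist_le_iff {c : ℝ} :
    tvDist P Q ≤ c ↔ ∀ S, MeasurableSet S → |P.real S - Q.real S| ≤ c := by
  have : Nonempty {S : Set α // MeasurableSet S} := ⟨⟨∅, .empty⟩⟩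
  exact (ciSup_le_iff (bddAbove_range_abs_measureReal_sub P Q)).trans Subtype.forall

theorem tvDist_le_mul_abs_sub_of_tvDist_succ_le {P : ℕ → Measure α} [∀ n, IsFiniteMeasure (P n)]
    {c : ℝ} (hP : ∀ n, tvDist (P (n + 1)) (P n) ≤ c) (n m : ℕ) :
    tvDist (P n) (P m) ≤ c * |(n : ℝ) - m| :=
  tvDist_le_iff.2 fun S hS =>
    dist_le_mul_abs_sub_of_dist_succ_le (f := fun n => (P n).real S)
      (fun k => (dist_comm _ _).trans_le (tvDist_le_iff.1 (hP k) S hS)) n m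

end TotalVariation

section Mixture

variable {α β γ : Type*} [MeasurableSpace α] [MeasurableSpace β] [MeasurableSpace γ]

theorem comp_map_eq_comap_comp (κ : Kernel β γ) (μ : Measure α) {f : α → β} (hf : Measurable f) :
    κ ∘ₘ μ.map f = κ.comap f hf ∘ₘ μ := by
  ext S hS
  rw [Measure.bind_apply hS κ.aemeasurable, Measure.bind_apply hS (Kernel.aemeasurable _),
    lintegral_map (κ.measurable_coe hS) hf]
  rfl

theorem measureReal_comp_eq_integral (κ : Kernel α β) [IsFiniteKernel κ] (μ : Measure α)
    {S : Set β} (hS : MeasurableSet S) : (κ ∘ₘ μ).real S = ∫ x, (κ x).real S ∂μ := by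
  rw [measureReal_def, Measure.bind_apply hS κ.aemeasurable]
  exact (integral_toReal (κ.measurable_coe hS).aemeasurable
    (ae_of_all _ fun _ => measure_lt_top _ _)).symm

theorem tvDist_comp_le {κ η : Kernel α β} [IsFiniteKernel κ] [IsFiniteKernel η]
    {μ : Measure α} [IsFiniteMeasure μ] {c : ℝ} (h : ∀ᵐ x ∂μ, tvDist (κ x) (η x) ≤ c) :
    tvDist (κ ∘ₘ μ) (η ∘ₘ μ) ≤ c * μ.real Set.univ := by
  refine tvDist_le_iff.2 fun S hS => ?_
  rw [measureReal_comp_eq_integral κ μ hS, measureReal_comp_eq_integral η μ hS,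
    ← integral_sub (Kernel.IsFiniteKernel.integrable μ κ hS)
      (Kernel.IsFiniteKernel.integrable μ η hS)]
  exact norm_integral_le_of_norm_le_const (f := fun x => (κ x).real S - (η x).real S)
    (h.mono fun x hx => tvDist_le_iff.1 hx S hS)

end Mixture

theorem measurePreserving_removeNth {n : ℕ} {α : Fin (n + 1) → Type*}
    [∀ i, MeasurableSpace (α i)] (μ : ∀ i, Measure (α i)) [∀ i, SigmaFinite (μ i)]
    (i : Fin (n + 1)) [IsProbabilityMeasure (μ i)] :
    MeasurePreserving i.removeNth (Measure.pi μ) (Measure.pi fun j => μ (i.succAbove j)) :=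
  measurePreserving_snd.comp (measurePreserving_piFinSuccAbove μ i)

/-- The datasets with `n` records form an arbitrary space `𝒳 n`, with law `P n`, and `π n` deletes a
record. -/
theorem statement16_general {𝒳 : ℕ → Type*} {𝒮 : Type*} [∀ n, MeasurableSpace (𝒳 n)]
    [MeasurableSpace 𝒮] (κ : ∀ n, Kernel (𝒳 n) 𝒮) [∀ n, IsFiniteKernel (κ n)]
    (P : ∀ n, Measure (𝒳 n)) [∀ n, IsProbabilityMeasure (P n)] {π : ∀ n, 𝒳 (n + 1) → 𝒳 n}
    (hπ : ∀ n, MeasurePreserving (π n) (P (n + 1)) (P n)) {δ : ℝ}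
    (hDP : ∀ n, ∀ᵐ x ∂P (n + 1), tvDist (κ (n + 1) x) (κ n (π n x)) ≤ δ) (n m : ℕ) :
    tvDist (κ n ∘ₘ P n) (κ m ∘ₘ P m) ≤ δ * |(n : ℝ) - m| := by
  refine tvDist_le_mul_abs_sub_of_tvDist_succ_le (P := fun n => κ n ∘ₘ P n) (fun k => ?_) n m
  have mixture : κ k ∘ₘ P k = (κ k).comap (π k) (hπ k).measurable ∘ₘ P (k + 1) := by
    rw [← comp_map_eq_comap_comp, (hπ k).map_eq]
  simpa only [mixture, probReal_univ, mul_one] using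
    tvDist_comp_le (η := (κ k).comap (π k) (hπ k).measurable) (hDP k)

/-- Lemma A.14: if the mechanism `M` is `(0,δ)`-DP (its output laws on
datasets differing by addition/removal of one record are within TV distance `δ`), and
`p(x|θ,n)` is the law of `n` i.i.d. records, then for any two sample sizes `n, m`,
`TV(p(s|θ,n), p(s|θ,m)) ≤ δ |n − m|`. -/
theorem statement16 {𝒳 Θ : Type*} [MeasurableSpace 𝒳] {d : ℕ}
    (M : (n : ℕ) → (Fin n → 𝒳) → Measure (Fin d → ℝ))
    (hM : ∀ n x, IsProbabilityMeasure (M n x))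
    (hMmeas : ∀ n, Measurable (M n))
    (δ : ℝ) (hδ : 0 ≤ δ)
    (hDP : ∀ n (x : Fin (n + 1) → 𝒳) (i : Fin (n + 1)),
      tvDist (M (n + 1) x) (M n (x ∘ i.succAbove)) ≤ δ)
    (Q : Θ → Measure 𝒳) (hQ : ∀ θ, IsProbabilityMeasure (Q θ)) :
    ∀ (θ : Θ) (n m : ℕ),
      tvDist ((Measure.pi fun _ : Fin n => Q θ).bind (M n))
        ((Measure.pi fun _ : Fin m => Q θ).bind (M m)) ≤ δ * |(n : ℝ) - (m : ℝ)| := by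
  intro θ
  have markov (n : ℕ) : IsMarkovKernel (⟨M n, hMmeas n⟩ : Kernel (Fin n → 𝒳) (Fin d → ℝ)) := ⟨hM n⟩
  exact statement16_general (fun n => ⟨M n, hMmeas n⟩) (fun n => Measure.pi fun _ : Fin n => Q θ)
    (fun n => measurePreserving_removeNth (fun _ => Q θ) 0) fun n => ae_of_all _ fun x => hDP n x 0
end
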